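/- arXiv:2008.05197 — 3 statements merged into one kernel-verified Lean document; each statement's English description precedes it below -/
import Mathlib

section
/- There exists a group homomorphism μ : Γ → Sym(G/H) into the group of permutations of the left coset space G/H satisfying μ_γ(g·(xH)) = ρ_γ(g)·μ_γ(xH) for all γ ∈ Γ, g ∈ G and xH ∈ G/H, if and only if there exists a map t : Γ → G satisfying conditions (i)–(ii) for (ρ, H). Moreover, when such a t exists, the formula μ_γ(gH) := ρ_γ(g) t_γ H is well defined and gives such a homomorphism μ. -/
/-- A map `t : Γ → G` satisfies conditions (i)–(ii) for `(ρ, H)` if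
(i) `ρ γ (H) = t γ * H * (t γ)⁻¹` for all `γ`, and
(ii) `t (γ₁ * γ₂) ∈ ρ γ₁ (t γ₂) * t γ₁ * H` for all `γ₁ γ₂`. -/
def SatisfiesConditions {Γ G : Type*} [Group Γ] [Group G] (ρ : Γ →* MulAut G)
    (H : Subgroup G) (t : Γ → G) : Prop :=
  (∀ γ : Γ, H.map (MulEquiv.toMonoidHom (ρ γ)) =
      H.map (MulEquiv.toMonoidHom (MulAut.conj (t γ)))) ∧
  (∀ γ₁ γ₂ : Γ, ((ρ γ₁) (t γ₂) * t γ₁)⁻¹ * t (γ₁ * γ₂) ∈ H)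

/-- There exists a group homomorphism `μ : Γ → Sym(G/H)` satisfying
`μ γ (g • xH) = ρ γ (g) • μ γ (xH)` if and only if there exists a map `t : Γ → G` satisfying
conditions (i)–(ii) for `(ρ, H)`; moreover, when such a `t` exists, the formula
`μ γ (gH) = ρ γ (g) * t γ * H` is well defined and gives such a homomorphism. -/
theorem stmt2 {Γ G : Type*} [Group Γ] [Group G] (ρ : Γ →* MulAut G) (H : Subgroup G) :
    ((∃ μ : Γ →* Equiv.Perm (G ⧸ H),
        ∀ (γ : Γ) (g : G) (x : G ⧸ H), μ γ (g • x) = (ρ γ) g • μ γ x) ↔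
      ∃ t : Γ → G, SatisfiesConditions ρ H t) ∧
    ∀ t : Γ → G, SatisfiesConditions ρ H t →
      ∃ μ : Γ →* Equiv.Perm (G ⧸ H),
        (∀ (γ : Γ) (g : G) (x : G ⧸ H), μ γ (g • x) = (ρ γ) g • μ γ x) ∧
        ∀ (γ : Γ) (g : G),
          μ γ (QuotientGroup.mk g) = QuotientGroup.mk ((ρ γ) g * t γ) := by
  have key : ∀ t : Γ → G, SatisfiesConditions ρ H t →
      ∃ μ : Γ →* Equiv.Perm (G ⧸ H),
        (∀ (γ : Γ) (g : G) (x : G ⧸ H), μ γ (g • x) = (ρ γ) g • μ γ x) ∧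
        ∀ (γ : Γ) (g : G),
          μ γ (QuotientGroup.mk g) = QuotientGroup.mk ((ρ γ) g * t γ) := by
    rintro t ⟨h1, h2⟩
    have hH : ∀ (γ : Γ) (h : G), h ∈ H → (t γ)⁻¹ * (ρ γ) h * t γ ∈ H := by
      intro γ h hh
      have hm : (ρ γ) h ∈ H.map (MulEquiv.toMonoidHom (ρ γ)) := ⟨h, hh, rfl⟩
      rw [h1 γ] at hm
      obtain ⟨k, hk, hk'⟩ := hm
      have e : t γ * k * (t γ)⁻¹ = (ρ γ) h := hk'
      rw [← e]
      have e2 : (t γ)⁻¹ * (t γ * k * (t γ)⁻¹) * t γ = k := by group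
      rw [e2]
      exact hk
    have ht1 : t 1 ∈ H := by
      have := h2 1 1
      simpa using this
    let F : Γ → G ⧸ H → G ⧸ H := fun γ =>
      Quotient.lift (fun g : G => (QuotientGroup.mk ((ρ γ) g * t γ) : G ⧸ H)) (by
        intro a b hab
        have hab' : a⁻¹ * b ∈ H := QuotientGroup.leftRel_apply.mp hab
        apply QuotientGroup.eq.mpr
        have := hH γ _ hab'
        simpa [mul_assoc] using this)
    have hF : ∀ γ (g : G), F γ (QuotientGroup.mk g) = QuotientGroup.mk ((ρ γ) g * t γ) :=
      fun _ _ => rfl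
    letI act : MulAction Γ (G ⧸ H) :=
      { smul := F
        one_smul := by
          intro x
          induction x using QuotientGroup.induction_on with
          | H g =>
            change F 1 _ = _
            rw [hF]
            apply QuotientGroup.eq.mpr
            simpa using ht1
        mul_smul := by
          intro a b x
          induction x using QuotientGroup.induction_on with
          | H g =>
            change F (a * b) _ = F a (F b _)
            rw [hF, hF, hF]
            symm
            apply QuotientGroup.eq.mpr
            have := h2 a b
            simpa [mul_assoc] using this }
    refine ⟨MulAction.toPermHom Γ (G ⧸ H), ?_, fun γ g => hF γ g⟩
    intro γ g x
    induction x using QuotientGroup.induction_on with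
    | H x =>
      change F γ (QuotientGroup.mk (g * x)) = (ρ γ) g • F γ (QuotientGroup.mk x)
      rw [hF, hF, map_mul, mul_assoc]
      rfl
  refine ⟨⟨?_, fun ⟨t, ht⟩ => ?_⟩, key⟩
  · rintro ⟨μ, hμ⟩
    have hex : ∀ γ, ∃ t : G, (QuotientGroup.mk t : G ⧸ H) = μ γ (QuotientGroup.mk 1) :=
      fun γ => QuotientGroup.mk_surjective _
    choose t ht using hex
    have hf : ∀ γ (g : G), μ γ (QuotientGroup.mk g) = QuotientGroup.mk ((ρ γ) g * t γ) := by
      intro γ g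
      have := hμ γ g (QuotientGroup.mk 1)
      rw [← ht] at this
      have e : g • (QuotientGroup.mk 1 : G ⧸ H) = QuotientGroup.mk g := by
        change (QuotientGroup.mk (g * 1) : G ⧸ H) = _
        rw [mul_one]
      rw [e] at this
      exact this
    have hiff : ∀ γ (h : G), h ∈ H ↔ (t γ)⁻¹ * (ρ γ) h * t γ ∈ H := by
      intro γ h
      have a : h ∈ H ↔ (QuotientGroup.mk 1 : G ⧸ H) = QuotientGroup.mk h := by
        rw [QuotientGroup.eq]; simp
      rw [a, ← (μ γ).injective.eq_iff, hf, hf, QuotientGroup.eq]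
      simp [mul_assoc]
    refine ⟨t, fun γ => ?_, fun a b => ?_⟩
    · ext x
      constructor
      · rintro ⟨h, hh, rfl⟩
        refine ⟨_, (hiff γ h).mp hh, ?_⟩
        change t γ * ((t γ)⁻¹ * (ρ γ) h * t γ) * (t γ)⁻¹ = (ρ γ) h
        group
      · rintro ⟨k, hk, rfl⟩
        refine ⟨(ρ γ).symm (t γ * k * (t γ)⁻¹), (hiff γ _).mpr ?_, ?_⟩
        · rw [MulEquiv.apply_symm_apply]
          have e2 : (t γ)⁻¹ * (t γ * k * (t γ)⁻¹) * t γ = k := by group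
          rw [e2]
          exact hk
        · exact MulEquiv.apply_symm_apply (ρ γ) _
    · apply QuotientGroup.eq.mp
      rw [ht, map_mul, Equiv.Perm.mul_apply, ← ht b, hf]
  · obtain ⟨μ, h, _⟩ := key t ht
    exact ⟨μ, h⟩
end

section
/- Let c : Γ → G be a map such that ρ_c := (γ ↦ inn_{c_γ} ∘ ρ_γ) is a group homomorphism Γ → Aut(G), suppose t : Γ → G satisfies conditions (i)–(ii) for (ρ, H), and assume Z(G) ⊆ H. Then the map s : Γ → G defined by s_γ := c_γ t_γ satisfies conditions (i)–(ii) for (ρ_c, H). -/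
/-- Let `c : Γ → G` be such that `ρ_c : γ ↦ inn_{c γ} ∘ ρ γ` is a group
homomorphism `Γ → Aut G`, suppose `t : Γ → G` satisfies conditions (i)–(ii) for `(ρ, H)`,
and assume `Z(G) ⊆ H`.  Then `s γ := c γ * t γ` satisfies conditions (i)–(ii) for
`(ρ_c, H)`. -/
theorem stmt6 {Γ G : Type*} [Group Γ] [Group G] (ρ : Γ →* MulAut G) (H : Subgroup G)
    (hZ : Subgroup.center G ≤ H)
    (c : Γ → G) (ρc : Γ →* MulAut G)
    (hρc : ∀ γ : Γ, ρc γ = MulAut.conj (c γ) * ρ γ)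
    (t : Γ → G) (ht : SatisfiesConditions ρ H t) :
    SatisfiesConditions ρc H (fun γ => c γ * t γ) := by
  obtain ⟨h1, h2⟩ := ht
  refine ⟨fun γ => ?_, fun a b => ?_⟩
  · have e1 : MulEquiv.toMonoidHom (ρc γ) = (MulEquiv.toMonoidHom (MulAut.conj (c γ))).comp
        (MulEquiv.toMonoidHom (ρ γ)) := by
      rw [hρc]; rfl
    have e2 : MulEquiv.toMonoidHom (MulAut.conj (c γ * t γ)) =
        (MulEquiv.toMonoidHom (MulAut.conj (c γ))).comp
        (MulEquiv.toMonoidHom (MulAut.conj (t γ))) := by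
      rw [map_mul]; rfl
    show Subgroup.map _ H = Subgroup.map (MulEquiv.toMonoidHom (MulAut.conj (c γ * t γ))) H
    rw [e1, e2, ← Subgroup.map_map, ← Subgroup.map_map, h1]
  · have key : ∀ g : G, c (a * b) * g * (c (a * b))⁻¹ =
        (c a * ρ a (c b)) * g * (c a * ρ a (c b))⁻¹ := by
      intro g
      have h := DFunLike.congr_fun (map_mul ρc a b) ((ρ (a * b))⁻¹ g)
      rw [hρc, hρc, hρc] at h
      simp only [MulAut.mul_apply, MulAut.conj_apply, MulAut.apply_inv_self, map_mul,
        map_inv] at h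
      have h3 : ρ a (ρ b ((ρ a * ρ b)⁻¹ g)) = g := by
        rw [← MulAut.mul_apply, MulAut.apply_inv_self]
      simp only [mul_inv_rev, map_mul, map_inv, MulAut.mul_apply] at h h3
      rw [h3] at h
      rw [h]
      group
    have hz : (c a * ρ a (c b))⁻¹ * c (a * b) ∈ Subgroup.center G := by
      rw [Subgroup.mem_center_iff]
      intro g
      have h := key g
      rw [mul_inv_eq_iff_eq_mul] at h
      rw [mul_assoc _ (c (a * b)) g, h]
      group
    have hc := Subgroup.mem_center_iff.mp hz
    have e : (ρc a (c b * t b) * (c a * t a))⁻¹ * (c (a * b) * t (a * b)) =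
        ((c a * ρ a (c b))⁻¹ * c (a * b)) * ((ρ a (t b) * t a)⁻¹ * t (a * b)) := by
      rw [← mul_assoc (_ * c (a * b)), ← hc, hρc]
      simp only [MulAut.mul_apply, MulAut.conj_apply, map_mul]
      group
    show (ρc a (c b * t b) * (c a * t a))⁻¹ * (c (a * b) * t (a * b)) ∈ H
    rw [e]
    exact H.mul_mem (hZ hz) (h2 a b)
end

section
/- Let n ≥ 3 be odd, let Q = N_{SL₂(ℂ)}(A_n)/A_n = D_∞/A_n, and let θ be the involutive automorphism of Q induced by σ_c (i.e. θ(g·A_n) = σ_c(g)·A_n). Then the θ-cocycles in Q are exactly the classes of the matrices diag(t, t⁻¹) with t ∈ ℝ*; such a cocycle is equivalent to the class of I₂ if t > 0 and to the class of −I₂ if t < 0, and these two classes are inequivalent. In particular the cohomology set H¹(ℤ/2ℤ, Q) has exactly two elements. -/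
noncomputable section

open Matrix

/-- `SL(2,ℂ)`, the group of 2×2 complex matrices of determinant 1. -/
abbrev SL2C : Type := Matrix.SpecialLinearGroup (Fin 2) ℂ

/-- `ζ n = exp(2πi/n)`, a primitive `n`-th root of unity. -/
def ζc (n : ℕ) : ℂ := Complex.exp (2 * Real.pi * Complex.I / (n : ℂ))

lemma ζc_ne_zero (n : ℕ) : ζc n ≠ 0 := Complex.exp_ne_zero _

/-- `ω n = diag(ζ n, (ζ n)⁻¹)` as an element of `SL(2,ℂ)`. -/
def ωsl (n : ℕ) : SL2C :=
  ⟨!![ζc n, 0; 0, (ζc n)⁻¹], by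
    rw [Matrix.det_fin_two_of]
    simp [mul_inv_cancel₀ (ζc_ne_zero n)]⟩

/-- `-I₂` as an element of `SL(2,ℂ)`. -/
def mIsl : SL2C :=
  ⟨!![-1, 0; 0, -1], by rw [Matrix.det_fin_two_of]; norm_num⟩

/-- The compact real structure `σ_c` on `SL(2,ℂ)`: `g ↦ (g*)⁻¹`, the inverse of the
conjugate transpose. -/
def σc (g : SL2C) : SL2C :=
  (⟨(g : Matrix (Fin 2) (Fin 2) ℂ)ᴴ, by
    rw [Matrix.det_conjTranspose, Matrix.SpecialLinearGroup.det_coe, star_one]⟩ : SL2C)⁻¹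

/-- The cyclic subgroup `A_n = ⟨ω n⟩` of `SL(2,ℂ)`, of order `n`. -/
def Asub (n : ℕ) : Subgroup SL2C := Subgroup.closure {ωsl n}

/-- The subgroup `D_∞` of monomial (diagonal or antidiagonal) matrices in `SL(2,ℂ)`. -/
def Dinf : Subgroup SL2C where
  carrier := {g | ((g : Matrix (Fin 2) (Fin 2) ℂ) 0 1 = 0 ∧
      (g : Matrix (Fin 2) (Fin 2) ℂ) 1 0 = 0) ∨
    ((g : Matrix (Fin 2) (Fin 2) ℂ) 0 0 = 0 ∧
      (g : Matrix (Fin 2) (Fin 2) ℂ) 1 1 = 0)}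
  one_mem' := by
    left
    constructor <;> simp [Matrix.SpecialLinearGroup.coe_one, Matrix.one_apply]
  mul_mem' := by
    rintro a b (⟨ha1, ha2⟩ | ⟨ha1, ha2⟩) (⟨hb1, hb2⟩ | ⟨hb1, hb2⟩)
    · left
      constructor <;>
        simp [Matrix.SpecialLinearGroup.coe_mul, Matrix.mul_apply, Fin.sum_univ_two,
          ha1, ha2, hb1, hb2]
    · right
      constructor <;>
        simp [Matrix.SpecialLinearGroup.coe_mul, Matrix.mul_apply, Fin.sum_univ_two,
          ha1, ha2, hb1, hb2]
    · right
      constructor <;>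
        simp [Matrix.SpecialLinearGroup.coe_mul, Matrix.mul_apply, Fin.sum_univ_two,
          ha1, ha2, hb1, hb2]
    · left
      constructor <;>
        simp [Matrix.SpecialLinearGroup.coe_mul, Matrix.mul_apply, Fin.sum_univ_two,
          ha1, ha2, hb1, hb2]
  inv_mem' := by
    rintro a (⟨h1, h2⟩ | ⟨h1, h2⟩)
    · left
      constructor <;>
        simp [Matrix.SpecialLinearGroup.coe_inv, Matrix.adjugate_fin_two, h1, h2]
    · right
      constructor <;>
        simp [Matrix.SpecialLinearGroup.coe_inv, Matrix.adjugate_fin_two, h1, h2]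

lemma sig_apply (g : SL2C) : ((σc g : SL2C) : Matrix (Fin 2) (Fin 2) ℂ) =
    !![star (g 1 1), - star (g 1 0); - star (g 0 1), star (g 0 0)] := by
  change Matrix.adjugate (g : Matrix (Fin 2) (Fin 2) ℂ)ᴴ = _
  rw [Matrix.adjugate_fin_two]
  simp [Matrix.conjTranspose_apply]

lemma inv_apply' (g : SL2C) : ((g⁻¹ : SL2C) : Matrix (Fin 2) (Fin 2) ℂ) =
    !![g 1 1, - g 0 1; - g 1 0, g 0 0] := by
  rw [Matrix.SpecialLinearGroup.coe_inv, Matrix.adjugate_fin_two]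

lemma mI_apply : ((mIsl : SL2C) : Matrix (Fin 2) (Fin 2) ℂ) = !![-1, 0; 0, -1] := rfl

lemma det_eq (g : SL2C) : g 0 0 * g 1 1 - g 0 1 * g 1 0 = 1 := by
  have := g.det_coe
  rwa [Matrix.det_fin_two] at this

lemma omega_pow (n k : ℕ) : ((ωsl n ^ k : SL2C) : Matrix (Fin 2) (Fin 2) ℂ) =
    !![ζc n ^ k, 0; 0, (ζc n ^ k)⁻¹] := by
  induction k with
  | zero => ext i j; fin_cases i <;> fin_cases j <;> simp
  | succ k ih =>
    rw [pow_succ, Matrix.SpecialLinearGroup.coe_mul, ih]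
    ext i j
    fin_cases i <;> fin_cases j <;> simp [ωsl, Matrix.mul_apply, Fin.sum_univ_two, pow_succ, mul_comm]

lemma zeta_pow (n : ℕ) (hn : n ≠ 0) : IsPrimitiveRoot (ζc n) n :=
  Complex.isPrimitiveRoot_exp n hn

lemma diag_ext (x y : SL2C) (h1 : x 0 1 = 0) (h2 : x 1 0 = 0) (h3 : y 0 1 = 0) (h4 : y 1 0 = 0)
    (h : x 0 0 = y 0 0) : x = y := by
  have hx := det_eq x
  have hy := det_eq y
  simp only [h1, h2, h3, h4, h, mul_zero, sub_zero] at hx hy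
  have h0 : y 0 0 ≠ 0 := left_ne_zero_of_mul (hy.trans_ne one_ne_zero)
  have h5 : x 1 1 = y 1 1 := mul_left_cancel₀ h0 (hx.trans hy.symm)
  ext i j
  fin_cases i <;> fin_cases j <;> simp [h1, h2, h3, h4, h, h5]

lemma mem_A (n : ℕ) (hn : n ≠ 0) (x : SL2C) :
    x ∈ Asub n ↔ x 0 1 = 0 ∧ x 1 0 = 0 ∧ x 0 0 ^ n = 1 := by
  have hz := zeta_pow n hn
  have : NeZero n := ⟨hn⟩
  constructor
  · intro h
    induction h using Subgroup.closure_induction with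
    | mem x hx =>
      rw [Set.mem_singleton_iff] at hx
      subst hx
      simp [ωsl, hz.pow_eq_one]
    | one => simp
    | mul x y _ _ hx hy =>
      obtain ⟨a, b, c⟩ := hx
      obtain ⟨d, e, f⟩ := hy
      simp [Matrix.mul_apply, Fin.sum_univ_two, a, b, d, e, mul_pow, c, f]
    | inv x _ hx =>
      obtain ⟨a, b, c⟩ := hx
      have hd := det_eq x
      simp only [a, b, mul_zero, sub_zero] at hd
      rw [inv_apply']
      have : (x 0 0 * x 1 1) ^ n = 1 := by rw [hd, one_pow]
      rw [mul_pow, c, one_mul] at this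
      simp [a, b, this]
  · rintro ⟨a, b, c⟩
    obtain ⟨k, _, hk⟩ := hz.eq_pow_of_pow_eq_one c
    have : x = ωsl n ^ k := by
      apply diag_ext _ _ a b <;> rw [omega_pow] <;> simp [hk]
    rw [this]
    exact Subgroup.pow_mem _ (Subgroup.subset_closure (Set.mem_singleton _)) _

lemma no_neg (n : ℕ) (hodd : Odd n) (a : ℂ) (h : (-(a * star a)) ^ n = 1) : False := by
  have h1 : a * star a = ((Complex.normSq a : ℝ) : ℂ) := Complex.mul_conj a
  rw [h1, ← Complex.ofReal_neg, ← Complex.ofReal_pow] at h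
  have h2 : (-Complex.normSq a) ^ n = 1 := by exact_mod_cast h
  rw [hodd.neg_pow] at h2
  have := pow_nonneg (Complex.normSq_nonneg a) n
  linarith

/-- Let `n ≥ 3` be odd and let `Q = D_∞/A_n`, with the involution `θ`
induced by `σ_c`.  In terms of representatives: an element `g ∈ D_∞` represents a θ-cocycle
iff `g * σ_c(g) ∈ A_n`, and two classes are equivalent via `b ∈ D_∞` iff
`(b⁻¹ * r * σ_c(b))⁻¹ * g ∈ A_n`.  Then the θ-cocycles in `Q` are exactly the classes of the
matrices `diag(t, t⁻¹)` with `t ∈ ℝ*`; such a cocycle is equivalent to the class of `I₂` if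
`t > 0` and to the class of `-I₂` if `t < 0`, and these two classes are inequivalent
cocycles.  In particular `H¹(ℤ/2ℤ, Q)` has exactly two elements. -/
theorem stmt15 (n : ℕ) (h3 : 3 ≤ n) (hodd : Odd n) :
    (∀ g ∈ Dinf, (g * σc g ∈ Asub n ↔
      ∃ t : ℝ, t ≠ 0 ∧ ∃ d : SL2C,
        (d : Matrix (Fin 2) (Fin 2) ℂ) = !![(t : ℂ), 0; 0, (t : ℂ)⁻¹] ∧
        g⁻¹ * d ∈ Asub n)) ∧
    (∀ t : ℝ, t ≠ 0 → ∀ d : SL2C,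
      (d : Matrix (Fin 2) (Fin 2) ℂ) = !![(t : ℂ), 0; 0, (t : ℂ)⁻¹] →
      (0 < t → ∃ b ∈ Dinf, (b⁻¹ * 1 * σc b)⁻¹ * d ∈ Asub n) ∧
      (t < 0 → ∃ b ∈ Dinf, (b⁻¹ * mIsl * σc b)⁻¹ * d ∈ Asub n)) ∧
    ((1 : SL2C) * σc 1 ∈ Asub n ∧ mIsl * σc mIsl ∈ Asub n) ∧
    ¬∃ b ∈ Dinf, (b⁻¹ * 1 * σc b)⁻¹ * mIsl ∈ Asub n := by
  have hn : n ≠ 0 := by omega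
  refine ⟨?_, ?_, ?_, ?_⟩
  · intro g hg
    rw [mem_A n hn]
    simp only [Matrix.SpecialLinearGroup.coe_mul, sig_apply, Matrix.mul_apply, Fin.sum_univ_two,
      mem_A n hn, inv_apply']
    have hd := det_eq g
    constructor
    · rintro ⟨-, -, h⟩
      rcases hg with ⟨h1, h2⟩ | ⟨h1, h2⟩
      · simp [h1] at h
        simp only [h1, h2, mul_zero, sub_zero] at hd
        set a := g 0 0
        set b := g 1 1
        obtain ⟨k, hk⟩ := hodd
        set z := a * (starRingEnd ℂ) b with hz
        have ha : a ≠ 0 := left_ne_zero_of_mul (hd.trans_ne one_ne_zero)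
        have hb : b ≠ 0 := right_ne_zero_of_mul (hd.trans_ne one_ne_zero)
        have hd' : (starRingEnd ℂ) a * (starRingEnd ℂ) b = 1 := by
          rw [← map_mul, hd, map_one]
        have hzz : z * (starRingEnd ℂ) z = 1 := by
          rw [hz, map_mul, Complex.conj_conj]
          linear_combination hd + a * b * hd'
        have hz0 : z ≠ 0 := left_ne_zero_of_mul (hzz.trans_ne one_ne_zero)
        have hw2 : (z ^ (k+1)) ^ 2 = z := by
          calc (z ^ (k+1)) ^ 2 = z ^ n * z := by rw [hk]; ring
            _ = z := by rw [h, one_mul]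
        set w := z ^ (k+1) with hw
        have hww : w * (starRingEnd ℂ) w = 1 := by
          rw [hw, map_pow, ← mul_pow, hzz, one_pow]
        have hw0 : w ≠ 0 := left_ne_zero_of_mul (hww.trans_ne one_ne_zero)
        have hreal : (starRingEnd ℂ) (a * (starRingEnd ℂ) w) = a * (starRingEnd ℂ) w := by
          rw [map_mul, Complex.conj_conj]
          -- conj a = a / z, as z conj a = a
          have e1 : z * (starRingEnd ℂ) a = a := by
            rw [hz]; linear_combination a * hd'
          apply mul_left_cancel₀ hw0
          linear_combination (starRingEnd ℂ) a * hw2 + e1 - a * hww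
        obtain ⟨t, ht⟩ := Complex.conj_eq_iff_real.mp hreal
        have ht0 : (t : ℂ) ≠ 0 := by
          rw [← ht]
          exact mul_ne_zero ha (right_ne_zero_of_mul (hww.trans_ne one_ne_zero))
        refine ⟨t, by exact_mod_cast ht0, ⟨!![(t : ℂ), 0; 0, (t : ℂ)⁻¹], by
          rw [Matrix.det_fin_two_of]; simp [ht0]⟩, rfl, ?_⟩
        simp [h1, h2]
        change (b * (t : ℂ)) ^ n = 1
        have e : b * (t : ℂ) = (starRingEnd ℂ) w := by
          rw [← ht]; linear_combination (starRingEnd ℂ) w * hd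
        rw [e, ← map_pow, hw, ← pow_mul, mul_comm, pow_mul, h, one_pow, map_one]
      · exfalso
        simp [h1] at h
        exact no_neg n hodd _ h
    · rintro ⟨t, ht, d, hdd, h1, h2, h3⟩
      have ht' : (t : ℂ) ≠ 0 := by exact_mod_cast ht
      simp [hdd] at h1 h2 h3
      have g01 : g 0 1 = 0 := by tauto
      have g10 : g 1 0 = 0 := by tauto
      simp only [g01, g10, mul_zero, sub_zero] at hd
      have hd' : (starRingEnd ℂ) (g 0 0) * (starRingEnd ℂ) (g 1 1) = 1 := by
        rw [← map_mul, hd, map_one]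
      simp [g01, g10]
      have e1 : (g 1 1) ^ n * (t : ℂ) ^ n = 1 := by rw [← mul_pow]; exact h3
      have e2 : ((starRingEnd ℂ) (g 1 1)) ^ n * (t : ℂ) ^ n = 1 := by
        have := congrArg (starRingEnd ℂ) e1
        simpa using this
      have e3 : ((starRingEnd ℂ) (g 1 1)) ^ n = (g 1 1) ^ n :=
        mul_right_cancel₀ (pow_ne_zero n ht') (e2.trans e1.symm)
      rw [mul_pow, e3, ← mul_pow, hd, one_pow]
  · intro t ht d hd
    have key : ∀ s : ℝ, s ≠ 0 → ∃ b ∈ Dinf, (b : Matrix (Fin 2) (Fin 2) ℂ) =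
        !![(s : ℂ), 0; 0, (s : ℂ)⁻¹] := by
      intro s hs
      have hs' : (s : ℂ) ≠ 0 := by exact_mod_cast hs
      exact ⟨⟨!![(s : ℂ), 0; 0, (s : ℂ)⁻¹], by
          rw [Matrix.det_fin_two_of]; simp [hs']⟩, Or.inl ⟨rfl, rfl⟩, rfl⟩
    constructor
    · intro h
      have hs := Real.sqrt_pos.mpr h
      obtain ⟨b, hb, e⟩ := key (Real.sqrt t)⁻¹ (by positivity)
      refine ⟨b, hb, ?_⟩
      have hq : ((Real.sqrt t : ℝ) : ℂ) * (Real.sqrt t : ℝ) = t := by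
        rw [← Complex.ofReal_mul, Real.mul_self_sqrt h.le]
      have ht' : (t : ℂ) ≠ 0 := by exact_mod_cast ht
      rw [mem_A n hn]
      simp only [Matrix.SpecialLinearGroup.coe_mul, Matrix.SpecialLinearGroup.coe_one, mI_apply, inv_apply', sig_apply,
        Matrix.mul_apply, Fin.sum_univ_two, hd, e]
      simp
      rw [← mul_inv, hq, inv_mul_cancel₀ ht', one_pow]
    · intro h
      have h' : 0 < -t := by linarith
      have hs := Real.sqrt_pos.mpr h'
      obtain ⟨b, hb, e⟩ := key (Real.sqrt (-t))⁻¹ (by positivity)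
      refine ⟨b, hb, ?_⟩
      have hq : ((Real.sqrt (-t) : ℝ) : ℂ) * (Real.sqrt (-t) : ℝ) = -t := by
        rw [← Complex.ofReal_mul, Real.mul_self_sqrt h'.le, Complex.ofReal_neg]
      have ht' : (t : ℂ) ≠ 0 := by exact_mod_cast ht
      rw [mem_A n hn]
      simp only [Matrix.SpecialLinearGroup.coe_mul, Matrix.SpecialLinearGroup.coe_one, mI_apply, inv_apply', sig_apply,
        Matrix.mul_apply, Fin.sum_univ_two, hd, e]
      simp
      rw [← mul_inv, hq, inv_neg, neg_mul, inv_mul_cancel₀ ht', neg_neg, one_pow]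
  · constructor <;> rw [mem_A n hn] <;>
      simp [sig_apply, Matrix.mul_apply, Fin.sum_univ_two, mI_apply]
  · rintro ⟨b, hb, h⟩
    rw [mem_A n hn] at h
    obtain ⟨-, -, h⟩ := h
    rcases hb with ⟨h1, h2⟩ | ⟨h1, h2⟩
    · simp only [Matrix.SpecialLinearGroup.coe_mul, Matrix.SpecialLinearGroup.coe_one, mI_apply, inv_apply', sig_apply,
        Matrix.mul_apply, Fin.sum_univ_two] at h
      simp [h1, h2] at h
      exact no_neg n hodd (b 0 0) (by simpa [mul_comm] using h)
    · simp only [Matrix.SpecialLinearGroup.coe_mul, Matrix.SpecialLinearGroup.coe_one, mI_apply, inv_apply', sig_apply,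
        Matrix.mul_apply, Fin.sum_univ_two] at h
      simp [h1, h2] at h
      exact no_neg n hodd (b 1 0) (by simpa [mul_comm] using h)
end
end
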